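/- There exists a constant K > 1 such that for every integer N ≥ 1 and every real β > 0, the spherical packing number satisfies 1 ≤ Θ_{N,β}(S) ≤ K^β; moreover Θ_{N,0}(S) = 1. -/

import Mathlib

open MeasureTheory

/-- The unipolar Green function of the sphere. -/
noncomputable def Usph (z w : ℂ) : ℝ :=
  1 / 2 + 1 / 2 * Real.log (‖z - w‖ ^ 2 / ((1 + ‖z‖ ^ 2) * (1 + ‖w‖ ^ 2)))

/-- The spherical packing number `Θ_{N,β}(S)`. -/
noncomputable def ThetaSph (N : ℕ) (β : ℝ) : ℝ :=
  ⨅ w : Fin N → ℂ,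
    1 / Real.pi *
      ∫ z : ℂ, Real.exp (∑ j, β * Usph z (w j)) * (1 / (1 + ‖z‖ ^ 2) ^ 2)

open Real Set Filter
open scoped ENNReal ComplexConjugate

/-!
The rotations of the sphere act transitively and preserve the spherical measure, and by Archimedes'
theorem `‖z‖² / (1 + ‖z‖²)` is uniformly distributed under it. Hence every `Usph · w` has mean zero,
and Jensen's inequality gives the lower bound.

For the upper bound it suffices to place the `N` points so that their total potential is bounded
above by a constant. They are put on concentric circles, the `i`-th one carrying `nᵢ` points,
regularly spaced, at radius `exp (σᵢ / 2)`. In the coordinate `t = 2 log ‖z‖` such a circle has the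
potential `nᵢ (max t σᵢ - log (1 + exp t) - log (1 + exp σᵢ) + 1) / 2`, up to an error that decays
exponentially in `nᵢ |t - σᵢ|`. The function `log (1 + exp t)` is the Legendre conjugate of the
negative binary entropy on `[0, 1]`. Interpolating this entropy linearly between nodes at distances
`nᵢ / N`, and letting `σᵢ` be the slopes of the interpolation, one gets `∑ nᵢ max t σᵢ` as `N` times
the conjugate of the interpolation. This is at most `N log (1 + exp t)`, and the nodes `i² / N` near
`0`, reflected near `1`, are so dense that the two differ by `O(1)`; integrating the difference
against the uniform distribution of `sigmoid t` shows that the constant terms sum to `O(1)` as well.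
For these nodes `σᵢ` is approximately `2 log i` and `nᵢ` is `2 i + 1`, and the exponential errors of
the circles sum to `O(1)`.
-/

/-! ### The spherical measure -/

/-- The area measure of the Riemann sphere in the stereographic coordinate, normalized to have total
mass one. -/
noncomputable def sphericalMeasure : Measure ℂ :=
  volume.withDensity fun z => .ofReal (π * (1 + ‖z‖ ^ 2) ^ 2)⁻¹

lemma integral_sphericalMeasure (f : ℂ → ℝ) :
    ∫ z, f z ∂sphericalMeasure = 1 / π * ∫ z, f z * (1 / (1 + ‖z‖ ^ 2) ^ 2) := by
  rw [sphericalMeasure, integral_withDensity_eq_integral_toReal_smul (by fun_prop) (by simp),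
    ← integral_const_mul]
  congr with z
  rw [ENNReal.toReal_ofReal (by positivity), smul_eq_mul]
  field_simp

lemma thetaSph_eq_iInf_integral (N : ℕ) (β : ℝ) :
    ThetaSph N β = ⨅ w : Fin N → ℂ, ∫ z, exp (∑ j, β * Usph z (w j)) ∂sphericalMeasure := by
  simp only [ThetaSph, integral_sphericalMeasure]

lemma measurePreserving_withDensity_of_hasFDerivWithinAt {E : Type*} [NormedAddCommGroup E]
    [NormedSpace ℝ E] [FiniteDimensional ℝ E] [MeasurableSpace E] [BorelSpace E]
    {μ : Measure E} [μ.IsAddHaarMeasure] {f : E → E} {f' : E → E →L[ℝ] E} {s : Set E}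
    {ρ τ : E → ℝ≥0∞} (hf : Measurable f) (hs : MeasurableSet s) (hs_ae : s =ᵐ[μ] univ)
    (himage_ae : f '' s =ᵐ[μ] univ) (hf' : ∀ x ∈ s, HasFDerivWithinAt f (f' x) s x)
    (hinj : InjOn f s) (hρ : ∀ x ∈ s, .ofReal |(f' x).det| * τ (f x) = ρ x) :
    MeasurePreserving f (μ.withDensity ρ) (μ.withDensity τ) := by
  refine ⟨hf, Measure.ext fun A hA => ?_⟩
  have hfA : MeasurableSet (f ⁻¹' A ∩ s) := (hf hA).inter hs
  calc Measure.map f (μ.withDensity ρ) A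
      = ∫⁻ x in f ⁻¹' A, ρ x ∂μ := by rw [Measure.map_apply hf hA, withDensity_apply _ (hf hA)]
    _ = ∫⁻ x in f ⁻¹' A ∩ s, ρ x ∂μ := by
        refine (setLIntegral_congr ?_).symm
        simpa using (ae_eq_refl (f ⁻¹' A)).inter hs_ae
    _ = ∫⁻ x in f ⁻¹' A ∩ s, .ofReal |(f' x).det| * τ (f x) ∂μ :=
        setLIntegral_congr_fun hfA fun x hx => (hρ x hx.2).symm
    _ = ∫⁻ y in f '' (f ⁻¹' A ∩ s), τ y ∂μ :=
        (lintegral_image_eq_lintegral_abs_det_fderiv_mul μ hfA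
          (fun x hx => (hf' x hx.2).mono inter_subset_right) (hinj.mono inter_subset_right) τ).symm
    _ = ∫⁻ y in A, τ y ∂μ := by
        refine setLIntegral_congr ?_
        rw [image_preimage_inter]
        simpa using (ae_eq_refl A).inter himage_ae
    _ = μ.withDensity τ A := (withDensity_apply _ hA).symm

/-- The rotation of the sphere that takes `0` to `w`, in the stereographic coordinate. The point
`1 / conj w`, which it takes to `∞`, is given the junk value `0`. -/
noncomputable def sphereRotation (w z : ℂ) : ℂ :=
  (z + w) / (1 - conj w * z)

lemma norm_one_sub_conj_mul_sq_add_norm_add_sq (z w : ℂ) :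
    ‖1 - conj w * z‖ ^ 2 + ‖z + w‖ ^ 2 = (1 + ‖z‖ ^ 2) * (1 + ‖w‖ ^ 2) := by
  simp only [← Complex.normSq_eq_norm_sq, Complex.normSq_apply, Complex.sub_re, Complex.sub_im,
    Complex.mul_re, Complex.mul_im, Complex.add_re, Complex.add_im, Complex.conj_re,
    Complex.conj_im, Complex.one_re, Complex.one_im]
  ring

lemma one_add_norm_sphereRotation_sq {w z : ℂ} (h : 1 - conj w * z ≠ 0) :
    1 + ‖sphereRotation w z‖ ^ 2 =
      (1 + ‖z‖ ^ 2) * (1 + ‖w‖ ^ 2) / ‖1 - conj w * z‖ ^ 2 := by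
  rw [sphereRotation, norm_div, ← norm_one_sub_conj_mul_sq_add_norm_add_sq, add_div, div_pow,
    div_self (by simpa using h)]

lemma one_add_conj_mul_self (w : ℂ) : 1 + conj w * w = ((1 + ‖w‖ ^ 2 : ℝ) : ℂ) := by
  rw [← Complex.normSq_eq_conj_mul_self, Complex.normSq_eq_norm_sq]
  norm_cast

lemma one_add_conj_mul_self_ne_zero (w : ℂ) : 1 + conj w * w ≠ 0 := by
  rw [one_add_conj_mul_self, Complex.ofReal_ne_zero]
  positivity

lemma norm_one_add_conj_mul_self (w : ℂ) : ‖1 + conj w * w‖ = 1 + ‖w‖ ^ 2 := by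
  rw [one_add_conj_mul_self, Complex.norm_of_nonneg (by positivity)]

lemma sphereRotation_sub_self {w z : ℂ} (h : 1 - conj w * z ≠ 0) :
    sphereRotation w z - w = z * (1 + conj w * w) / (1 - conj w * z) := by
  rw [sphereRotation, div_sub' h]
  ring

lemma one_sub_conj_neg_mul_sphereRotation {w z : ℂ} (h : 1 - conj w * z ≠ 0) :
    1 - conj (-w) * sphereRotation w z = (1 + conj w * w) / (1 - conj w * z) := by
  rw [eq_div_iff h, sphereRotation, sub_mul, mul_assoc, div_mul_cancel₀ _ h, map_neg]
  ring

lemma sphereRotation_neg_sphereRotation {w z : ℂ} (h : 1 - conj w * z ≠ 0) :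
    sphereRotation (-w) (sphereRotation w z) = z := by
  rw [sphereRotation, one_sub_conj_neg_mul_sphereRotation h, ← sub_eq_add_neg,
    sphereRotation_sub_self h, div_div_div_cancel_right₀ h,
    mul_div_cancel_right₀ _ (one_add_conj_mul_self_ne_zero w)]

lemma one_sub_conj_neg_mul_sphereRotation_ne_zero {w z : ℂ} (h : 1 - conj w * z ≠ 0) :
    1 - conj (-w) * sphereRotation w z ≠ 0 := by
  rw [one_sub_conj_neg_mul_sphereRotation h]
  exact div_ne_zero (one_add_conj_mul_self_ne_zero w) h

lemma hasDerivAt_sphereRotation {w z : ℂ} (h : 1 - conj w * z ≠ 0) :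
    HasDerivAt (sphereRotation w) ((1 + conj w * w) / (1 - conj w * z) ^ 2) z := by
  refine (((hasDerivAt_id z).add_const w).div
    (((hasDerivAt_id z).const_mul (conj w)).const_sub 1) h).congr_deriv ?_
  simp only [id]
  ring

lemma ae_one_sub_mul_ne_zero (a : ℂ) : {z : ℂ | 1 - a * z ≠ 0} =ᵐ[volume] univ := by
  refine eventuallyEq_univ.mpr ?_
  filter_upwards [(countable_singleton a⁻¹).ae_notMem volume] with z hz h
  exact hz (eq_inv_of_mul_eq_one_right (sub_eq_zero.mp h).symm)

lemma sphereRotation_image (w : ℂ) :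
    sphereRotation w '' {z | 1 - conj w * z ≠ 0} = {z | 1 - conj (-w) * z ≠ 0} := by
  refine Subset.antisymm
    (image_subset_iff.mpr fun z hz => one_sub_conj_neg_mul_sphereRotation_ne_zero hz) fun z hz => ?_
  refine ⟨sphereRotation (-w) z, ?_, ?_⟩
  · simpa using one_sub_conj_neg_mul_sphereRotation_ne_zero hz
  · simpa using sphereRotation_neg_sphereRotation hz

lemma det_restrictScalars_toSpanSingleton (a : ℂ) :
    ((ContinuousLinearMap.toSpanSingleton ℂ a).restrictScalars ℝ).det = ‖a‖ ^ 2 := by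
  simp [ContinuousLinearMap.det, LinearMap.det_restrictScalars, Algebra.norm_complex_eq,
    Complex.normSq_eq_norm_sq]

lemma measurePreserving_sphereRotation (w : ℂ) :
    MeasurePreserving (sphereRotation w) sphericalMeasure sphericalMeasure := by
  refine measurePreserving_withDensity_of_hasFDerivWithinAt (s := {z | 1 - conj w * z ≠ 0})
    (by unfold sphereRotation; fun_prop) (measurableSet_eq_fun (by fun_prop) (by fun_prop)).compl
    (ae_one_sub_mul_ne_zero _) (sphereRotation_image w ▸ ae_one_sub_mul_ne_zero _)
    (fun z hz => ((hasDerivAt_sphereRotation hz).hasFDerivAt.restrictScalars ℝ).hasFDerivWithinAt)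
    (LeftInvOn.injOn fun z hz => sphereRotation_neg_sphereRotation hz) fun z hz => ?_
  have hz' : ‖1 - conj w * z‖ ≠ 0 := norm_ne_zero_iff.mpr hz
  rw [det_restrictScalars_toSpanSingleton, abs_of_nonneg (by positivity),
    ← ENNReal.ofReal_mul (by positivity), one_add_norm_sphereRotation_sq hz, norm_div, norm_pow,
    norm_one_add_conj_mul_self]
  congr 1
  field_simp

/-- A quarter of the squared chordal distance on the unit sphere, in the stereographic
coordinate. -/
noncomputable def chordalSq (z w : ℂ) : ℝ :=
  ‖z - w‖ ^ 2 / ((1 + ‖z‖ ^ 2) * (1 + ‖w‖ ^ 2))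

lemma chordalSq_sphereRotation {w z : ℂ} (h : 1 - conj w * z ≠ 0) :
    chordalSq (sphereRotation w z) w = chordalSq z 0 := by
  have h' : ‖1 - conj w * z‖ ≠ 0 := norm_ne_zero_iff.mpr h
  rw [chordalSq, chordalSq, one_add_norm_sphereRotation_sq h, sphereRotation_sub_self h,
    norm_div, norm_mul, norm_one_add_conj_mul_self]
  simp only [sub_zero, norm_zero]
  field_simp
  norm_num

lemma measurable_chordalSq (w : ℂ) : Measurable fun z => chordalSq z w := by
  unfold chordalSq
  fun_prop

lemma lintegral_comp_norm_complex {f : ℝ → ℝ≥0∞} (hf : Measurable f) :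
    ∫⁻ z : ℂ, f ‖z‖ = ENNReal.ofReal (2 * π) * ∫⁻ r in Ioi 0, ENNReal.ofReal r * f r := by
  have hpi : volume (Ioo (-π) π) = ENNReal.ofReal (2 * π) := by rw [volume_Ioo]; ring_nf
  rw [← Complex.lintegral_comp_polarCoord_symm, polarCoord_target, Measure.volume_eq_prod]
  calc ∫⁻ p in Ioi (0 : ℝ) ×ˢ Ioo (-π) π, ENNReal.ofReal p.1 • f ‖Complex.polarCoord.symm p‖
        ∂(volume.prod volume)
      = ∫⁻ p in Ioi (0 : ℝ) ×ˢ Ioo (-π) π, ENNReal.ofReal p.1 * f p.1 ∂(volume.prod volume) := by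
        refine setLIntegral_congr_fun (measurableSet_Ioi.prod measurableSet_Ioo) fun p hp => ?_
        rw [Complex.norm_polarCoord_symm, abs_of_pos hp.1, smul_eq_mul]
    _ = ∫⁻ r in Ioi 0, ∫⁻ _ in Ioo (-π) π, ENNReal.ofReal r * f r := by
        rw [setLIntegral_prod _ (by fun_prop)]
    _ = ENNReal.ofReal (2 * π) * ∫⁻ r in Ioi 0, ENNReal.ofReal r * f r := by
        simp only [lintegral_const, Measure.restrict_apply_univ, hpi]
        rw [lintegral_mul_const _ (by fun_prop), mul_comm]

lemma hasDerivAt_sq_div_one_add_sq (r : ℝ) :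
    HasDerivAt (fun r : ℝ => r ^ 2 / (1 + r ^ 2)) (2 * r / (1 + r ^ 2) ^ 2) r := by
  refine ((hasDerivAt_pow 2 r).div ((hasDerivAt_pow 2 r).const_add 1)
    (by positivity)).congr_deriv ?_
  simp only [Nat.cast_ofNat, Nat.add_one_sub_one, pow_one]
  ring

lemma injOn_sq_div_one_add_sq : InjOn (fun r : ℝ => r ^ 2 / (1 + r ^ 2)) (Ioi 0) := by
  intro r hr s hs hrs
  have : r ^ 2 = s ^ 2 := by
    field_simp at hrs
    linarith
  exact (pow_left_inj₀ (mem_Ioi.mp hr).le (mem_Ioi.mp hs).le two_ne_zero).mp this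

lemma image_sq_div_one_add_sq : (fun r : ℝ => r ^ 2 / (1 + r ^ 2)) '' Ioi 0 = Ioo 0 1 := by
  ext u
  constructor
  · rintro ⟨r, hr, rfl⟩
    have : 0 < r := hr
    exact ⟨by positivity, (div_lt_one (by positivity)).mpr (by linarith)⟩
  · rintro ⟨hu₀, hu₁⟩
    have hu : 0 < 1 - u := by linarith
    refine ⟨√(u / (1 - u)), sqrt_pos.mpr (by positivity), ?_⟩
    simp only [sq_sqrt (div_pos hu₀ hu).le]
    field_simp
    ring

/-- Archimedes' hat-box theorem. -/
lemma measurePreserving_chordalSq_zero :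
    MeasurePreserving (fun z => chordalSq z 0) sphericalMeasure (volume.restrict (Ioo 0 1)) := by
  refine ⟨measurable_chordalSq 0, Measure.ext fun A hA => ?_⟩
  let q : ℝ → ℝ := fun r => r ^ 2 / (1 + r ^ 2)
  let g : ℝ → ℝ≥0∞ := A.indicator 1
  have hg : Measurable g := measurable_one.indicator hA
  have hq : Measurable q := by fun_prop
  have hchord (z : ℂ) : chordalSq z 0 = q ‖z‖ := by simp [chordalSq, q]
  calc Measure.map (fun z => chordalSq z 0) sphericalMeasure A
      = ∫⁻ z, g (q ‖z‖) ∂sphericalMeasure := by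
        rw [← lintegral_indicator_one hA, lintegral_map hg (measurable_chordalSq 0)]
        simp only [hchord, g]
    _ = ∫⁻ z : ℂ, .ofReal (π * (1 + ‖z‖ ^ 2) ^ 2)⁻¹ * g (q ‖z‖) := by
        rw [sphericalMeasure, lintegral_withDensity_eq_lintegral_mul _ (by fun_prop) (by fun_prop)]
        rfl
    _ = .ofReal (2 * π) * ∫⁻ r in Ioi 0, .ofReal r * (.ofReal (π * (1 + r ^ 2) ^ 2)⁻¹ * g (q r)) :=
        lintegral_comp_norm_complex (f := fun r => .ofReal (π * (1 + r ^ 2) ^ 2)⁻¹ * g (q r))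
          (by fun_prop)
    _ = ∫⁻ r in Ioi 0, .ofReal |2 * r / (1 + r ^ 2) ^ 2| * g (q r) := by
        rw [← lintegral_const_mul _ (by fun_prop)]
        refine setLIntegral_congr_fun measurableSet_Ioi fun r hr => ?_
        have hr : 0 < r := hr
        simp only [← mul_assoc]
        rw [← ENNReal.ofReal_mul (by positivity), ← ENNReal.ofReal_mul (by positivity),
          abs_of_pos (by positivity)]
        congr 2
        field_simp
    _ = ∫⁻ u in Ioo 0 1, g u := by
        rw [← image_sq_div_one_add_sq, lintegral_image_eq_lintegral_abs_deriv_mul measurableSet_Ioi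
          (fun r _ => (hasDerivAt_sq_div_one_add_sq r).hasDerivWithinAt) injOn_sq_div_one_add_sq]
    _ = volume.restrict (Ioo 0 1) A := lintegral_indicator_one hA

lemma measurePreserving_chordalSq (w : ℂ) :
    MeasurePreserving (fun z => chordalSq z w) sphericalMeasure (volume.restrict (Ioo 0 1)) := by
  refine ⟨measurable_chordalSq w, ?_⟩
  have hae : (fun z => chordalSq z w) ∘ sphereRotation w =ᵐ[sphericalMeasure]
      fun z => chordalSq z 0 := by
    refine (withDensity_absolutelyContinuous _ _).ae_le ?_
    filter_upwards [eventuallyEq_univ.mp (ae_one_sub_mul_ne_zero (conj w))] with z hz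
    exact chordalSq_sphereRotation hz
  rw [← (measurePreserving_sphereRotation w).map_eq,
    Measure.map_map (measurable_chordalSq w) (measurePreserving_sphereRotation w).measurable,
    Measure.map_congr hae, measurePreserving_chordalSq_zero.map_eq]

instance : IsProbabilityMeasure sphericalMeasure :=
  ⟨by simpa using measurePreserving_chordalSq_zero.measure_preimage nullMeasurableSet_univ⟩

lemma Usph_eq (z w : ℂ) : Usph z w = 1 / 2 + 1 / 2 * log (chordalSq z w) := rfl

lemma integrable_Usph (w : ℂ) : Integrable (fun z => Usph z w) sphericalMeasure := by
  have hlog : IntegrableOn log (Ioo 0 1) := by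
    rw [← intervalIntegrable_iff_integrableOn_Ioo_of_le zero_le_one]
    exact intervalIntegral.intervalIntegrable_log'
  have hcomp : Integrable (fun z => log (chordalSq z w)) sphericalMeasure :=
    (measurePreserving_chordalSq w).integrable_comp_of_integrable (g := log) hlog
  simp only [Usph_eq]
  exact (integrable_const (1 / 2)).add (hcomp.const_mul (1 / 2))

lemma integral_Usph (w : ℂ) : ∫ z, Usph z w ∂sphericalMeasure = 0 := by
  have hmap := (measurePreserving_chordalSq w).map_eq
  calc ∫ z, Usph z w ∂sphericalMeasure
      = ∫ u in Ioo 0 1, (1 / 2 + 1 / 2 * log u) := by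
        rw [← hmap, integral_map (measurable_chordalSq w).aemeasurable (by fun_prop)]
        rfl
    _ = ∫ u in (0 : ℝ)..1, (1 / 2 + 1 / 2 * log u) := by
        rw [intervalIntegral.integral_of_le zero_le_one, integral_Ioc_eq_integral_Ioo]
    _ = 0 := by
        rw [intervalIntegral.integral_add (by simp)
          (intervalIntegral.intervalIntegrable_log'.const_mul _)]
        simp

lemma Usph_le_half (z w : ℂ) : Usph z w ≤ 1 / 2 := by
  have : chordalSq z w ≤ 1 := by
    refine div_le_one_of_le₀ ?_ (by positivity)
    rw [← norm_neg w, ← norm_one_sub_conj_mul_sq_add_norm_add_sq, ← sub_eq_add_neg]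
    linarith [sq_nonneg ‖1 - conj (-w) * z‖]
  have := log_nonpos (show 0 ≤ chordalSq z w by unfold chordalSq; positivity) this
  rw [Usph_eq]
  linarith

lemma one_le_integral_exp_sum_Usph {ι : Type*} [Fintype ι] {β : ℝ} (hβ : 0 ≤ β) (w : ι → ℂ) :
    1 ≤ ∫ z, exp (∑ j, β * Usph z (w j)) ∂sphericalMeasure := by
  have hint (j : ι) : Integrable (fun z => β * Usph z (w j)) sphericalMeasure :=
    (integrable_Usph (w j)).const_mul β
  have hsum : Integrable (fun z => ∑ j, β * Usph z (w j)) sphericalMeasure :=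
    integrable_finsetSum _ fun j _ => hint j
  have hmean : ∫ z, ∑ j, β * Usph z (w j) ∂sphericalMeasure = 0 := by
    rw [integral_finsetSum _ fun j _ => hint j]
    simp [integral_const_mul, integral_Usph]
  have hbound (z : ℂ) : ‖exp (∑ j, β * Usph z (w j))‖ ≤ exp (∑ _j : ι, β * (1 / 2)) := by
    rw [norm_of_nonneg (exp_pos _).le]
    gcongr
    exact Usph_le_half _ _
  have hexp : Integrable (fun z => exp (∑ j, β * Usph z (w j))) sphericalMeasure :=
    .of_bound hsum.aestronglyMeasurable.aemeasurable.exp.aestronglyMeasurable _ (.of_forall hbound)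
  calc (1 : ℝ) = exp (∫ z, ∑ j, β * Usph z (w j) ∂sphericalMeasure) := by rw [hmean, exp_zero]
    _ ≤ ∫ z, exp (∑ j, β * Usph z (w j)) ∂sphericalMeasure :=
      convexOn_exp.map_integral_le continuous_exp.continuousOn isClosed_univ
        (.of_forall fun _ => mem_univ _) hsum hexp

/-! ### Binary entropy and its Legendre conjugate -/

/-- The log-odds function, inverse to `Real.sigmoid`; it is the derivative of the negative binary
entropy. -/
noncomputable def logit (u : ℝ) : ℝ := log u - log (1 - u)

/-- The softplus function, the Legendre conjugate of the negative binary entropy. -/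
noncomputable def softplus (t : ℝ) : ℝ := log (1 + exp t)

lemma exp_softplus (t : ℝ) : exp (softplus t) = 1 + exp t := exp_log (by positivity)

lemma sigmoid_eq_exp_sub_softplus (t : ℝ) : sigmoid t = exp (t - softplus t) := by
  rw [exp_sub, exp_softplus, sigmoid_def, exp_neg]
  field_simp
  ring

lemma one_sub_sigmoid (t : ℝ) : 1 - sigmoid t = exp (-softplus t) := by
  rw [exp_neg, exp_softplus, ← sigmoid_neg, sigmoid_def, neg_neg]

lemma logit_sigmoid (t : ℝ) : logit (sigmoid t) = t := by
  rw [logit, one_sub_sigmoid, sigmoid_eq_exp_sub_softplus, log_exp, log_exp]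
  ring

lemma softplus_logit {u : ℝ} (hu : u ∈ Ioo 0 1) : softplus (logit u) = -log (1 - u) := by
  have : 1 - u ≠ 0 := (sub_pos.mpr hu.2).ne'
  rw [softplus, logit, exp_sub, exp_log hu.1, exp_log (sub_pos.mpr hu.2), ← log_inv]
  congr 1
  field_simp
  ring

lemma logit_mono {u v : ℝ} (hu : 0 < u) (huv : u ≤ v) (hv : v < 1) : logit u ≤ logit v :=
  sub_le_sub (log_le_log hu huv) (log_le_log (by linarith) (by linarith))

lemma log_sub_log_le_logit_sub_logit {u v : ℝ} (huv : u ≤ v) (hv : v < 1) :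
    log v - log u ≤ logit v - logit u := by
  have : log (1 - v) ≤ log (1 - u) := log_le_log (by linarith) (by linarith)
  rw [logit, logit]
  linarith

lemma hasDerivAt_neg_binEntropy {u : ℝ} (hu : u ∈ Ioo 0 1) :
    HasDerivAt (-binEntropy) (logit u) u :=
  (hasDerivAt_binEntropy hu.1.ne' hu.2.ne).neg.congr_deriv (neg_sub _ _)

lemma mul_sub_log_le_exp_sub {p : ℝ} (hp : 0 ≤ p) (y : ℝ) : p * (y - log p) ≤ exp y - p := by
  obtain rfl | hp := hp.eq_or_lt
  · simpa using (exp_pos y).le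
  · calc p * (y - log p) ≤ p * (exp (y - log p) - 1) :=
          mul_le_mul_of_nonneg_left (by linarith [add_one_le_exp (y - log p)]) hp.le
      _ = exp y - p := by
          rw [exp_sub, exp_log hp]
          field_simp

lemma mul_add_binEntropy_le_softplus {b : ℝ} (hb : b ∈ Icc 0 1) (t : ℝ) :
    b * t + binEntropy b ≤ softplus t := by
  have h₁ := mul_sub_log_le_exp_sub hb.1 (t - softplus t)
  have h₂ := mul_sub_log_le_exp_sub (sub_nonneg.mpr hb.2) (-softplus t)
  rw [← sigmoid_eq_exp_sub_softplus] at h₁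
  rw [← one_sub_sigmoid] at h₂
  rw [binEntropy, log_inv, log_inv]
  linarith

lemma mul_log_sub_log_le {p q : ℝ} (hp : 0 ≤ p) (hq : 0 < q) :
    p * (log p - log q) ≤ p * (p / q - 1) := by
  obtain rfl | hp := hp.eq_or_lt
  · simp
  · rw [← log_div hp.ne' hq.ne']
    gcongr
    exact log_le_sub_one_of_pos (div_pos hp hq)

/-- The defect in the Fenchel inequality is a relative entropy, hence at most the corresponding
`χ²`-divergence. -/
lemma softplus_logit_le {b u : ℝ} (hb : b ∈ Icc 0 1) (hu : u ∈ Ioo 0 1) :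
    softplus (logit u) ≤ b * logit u + binEntropy b + (b - u) ^ 2 / (u * (1 - u)) := by
  have hu₀ := hu.1
  have hu₁ := sub_pos.mpr hu.2
  have h₁ := mul_log_sub_log_le hb.1 hu₀
  have h₂ := mul_log_sub_log_le (sub_nonneg.mpr hb.2) hu₁
  have hχ : b * (b / u - 1) + (1 - b) * ((1 - b) / (1 - u) - 1) = (b - u) ^ 2 / (u * (1 - u)) := by
    field_simp
    ring
  rw [softplus_logit hu, logit, binEntropy, log_inv, log_inv]
  linarith

lemma sigmoid_mul_add_binEntropy (t : ℝ) :
    sigmoid t * t + binEntropy (sigmoid t) = softplus t := by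
  refine (mul_add_binEntropy_le_softplus ⟨sigmoid_nonneg t, sigmoid_le_one t⟩ t).antisymm ?_
  simpa [logit_sigmoid] using softplus_logit_le ⟨sigmoid_nonneg t, sigmoid_le_one t⟩
    ⟨sigmoid_pos t, sigmoid_lt_one t⟩

lemma intervalIntegrable_log_one_sub (a b : ℝ) :
    IntervalIntegrable (fun u => log (1 - u)) volume a b := by
  simpa using (intervalIntegral.intervalIntegrable_log' (a := 1 - a) (b := 1 - b)).comp_sub_left 1

lemma intervalIntegrable_logit (a b : ℝ) : IntervalIntegrable logit volume a b :=
  intervalIntegral.intervalIntegrable_log'.sub (intervalIntegrable_log_one_sub a b)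

lemma intervalIntegrable_max_logit (s a b : ℝ) :
    IntervalIntegrable (fun u => max (logit u) s) volume a b :=
  ⟨(intervalIntegrable_logit a b).1.sup (integrable_const s),
    (intervalIntegrable_logit a b).2.sup (integrable_const s)⟩

lemma integral_logit {a b : ℝ} (ha : 0 ≤ a) (hab : a ≤ b) (hb : b ≤ 1) :
    ∫ u in a..b, logit u = binEntropy a - binEntropy b := by
  rw [intervalIntegral.integral_eq_sub_of_hasDerivAt_of_le hab
    binEntropy_continuous.neg.continuousOn
    (fun u hu => hasDerivAt_neg_binEntropy (Ioo_subset_Ioo ha hb hu))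
    (intervalIntegrable_logit a b)]
  simp only [Pi.neg_apply, sub_neg_eq_add]
  ring

lemma integral_max_logit (s : ℝ) : ∫ u in (0 : ℝ)..1, max (logit u) s = softplus s := by
  have hv₀ := sigmoid_pos s
  have hv₁ := sigmoid_lt_one s
  have hleft : ∫ u in (0 : ℝ)..sigmoid s, max (logit u) s = ∫ _ in (0 : ℝ)..sigmoid s, s := by
    refine intervalIntegral.integral_congr_Ioo_of_le hv₀.le fun u hu => max_eq_right ?_
    simpa only [logit_sigmoid] using logit_mono hu.1 hu.2.le hv₁
  have hright : ∫ u in sigmoid s..1, max (logit u) s = ∫ u in sigmoid s..1, logit u := by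
    refine intervalIntegral.integral_congr_Ioo_of_le hv₁.le fun u hu => max_eq_left ?_
    simpa only [logit_sigmoid] using logit_mono hv₀ hu.1.le hu.2
  rw [← intervalIntegral.integral_add_adjacent_intervals (intervalIntegrable_max_logit s 0 _)
    (intervalIntegrable_max_logit s _ 1), hleft, hright, integral_logit hv₀.le hv₁.le le_rfl]
  simpa using sigmoid_mul_add_binEntropy s

lemma integral_neg_log_one_sub : ∫ u in (0 : ℝ)..1, -log (1 - u) = 1 := by
  rw [intervalIntegral.integral_neg, intervalIntegral.integral_comp_sub_left (fun u => log u)]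
  simp

/-! ### Piecewise linear interpolation of the entropy -/

/-- `b 0, …, b L` are the nodes of a partition of `[0, 1]`. -/
structure IsUnitPartition (b : ℕ → ℝ) (L : ℕ) : Prop where
  zero : b 0 = 0
  last : b L = 1
  strictMonoOn : StrictMonoOn b (Iic L)

/-- The slope over `[b i, b (i + 1)]` of the piecewise linear interpolation of the negative binary
entropy at the nodes `b`. -/
noncomputable def entropySlope (b : ℕ → ℝ) (i : ℕ) : ℝ :=
  slope (-binEntropy) (b i) (b (i + 1))

/-- The Legendre conjugate of the piecewise linear interpolation of the negative binary entropy at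
the nodes `b 0, …, b L` of a partition of `[0, 1]`. -/
noncomputable def interpConj (b : ℕ → ℝ) (L : ℕ) (t : ℝ) : ℝ :=
  ∑ i ∈ Finset.range L, (b (i + 1) - b i) * max t (entropySlope b i)

lemma sub_mul_entropySlope (b : ℕ → ℝ) (i : ℕ) :
    (b (i + 1) - b i) * entropySlope b i = binEntropy (b i) - binEntropy (b (i + 1)) := by
  rw [entropySlope, ← smul_eq_mul, sub_smul_slope]
  simp only [Pi.neg_apply, vsub_eq_sub, sub_neg_eq_add]
  ring

namespace IsUnitPartition

variable {b : ℕ → ℝ} {L : ℕ} (hb : IsUnitPartition b L)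

include hb

lemma mem_Icc {i : ℕ} (hi : i ≤ L) : b i ∈ Icc 0 1 := by
  have hmono := hb.strictMonoOn.monotoneOn
  exact ⟨hb.zero ▸ hmono L.zero_le hi zero_le, hb.last ▸ hmono hi self_mem_Iic hi⟩

lemma mem_Ioo {i : ℕ} (hi₀ : 0 < i) (hi : i < L) : b i ∈ Ioo 0 1 :=
  ⟨hb.zero ▸ hb.strictMonoOn L.zero_le hi.le hi₀, hb.last ▸ hb.strictMonoOn hi.le self_mem_Iic hi⟩

lemma lt_succ {i : ℕ} (hi : i < L) : b i < b (i + 1) :=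
  hb.strictMonoOn hi.le hi i.lt_succ_self

lemma logit_le_entropySlope {i : ℕ} (hi₀ : 0 < i) (hi : i < L) :
    logit (b i) ≤ entropySlope b i :=
  strictConcave_binEntropy.concaveOn.neg.le_slope_of_hasDerivAt (hb.mem_Icc hi.le) (hb.mem_Icc hi)
    (hb.lt_succ hi) (hasDerivAt_neg_binEntropy (hb.mem_Ioo hi₀ hi))

lemma entropySlope_le_logit {i : ℕ} (hi : i + 1 < L) :
    entropySlope b i ≤ logit (b (i + 1)) :=
  have hi' : i < L := by omega
  strictConcave_binEntropy.concaveOn.neg.slope_le_of_hasDerivAt (hb.mem_Icc hi'.le)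
    (hb.mem_Icc hi') (hb.lt_succ hi') (hasDerivAt_neg_binEntropy (hb.mem_Ioo i.succ_pos hi))

lemma logit_sub_logit_le_entropySlope_sub {j k : ℕ} (hjk : j < k) (hk : k < L) :
    logit (b k) - logit (b (j + 1)) ≤ entropySlope b k - entropySlope b j :=
  sub_le_sub (hb.logit_le_entropySlope (by omega) hk) (hb.entropySlope_le_logit (by omega))

lemma entropySlope_mono {j k : ℕ} (hjk : j ≤ k) (hk : k < L) :
    entropySlope b j ≤ entropySlope b k := by
  obtain rfl | hjk := hjk.eq_or_lt
  · rfl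
  have hnode : b (j + 1) ≤ b k :=
    hb.strictMonoOn.monotoneOn (show j + 1 ≤ L by omega) hk.le hjk
  linarith [hb.logit_sub_logit_le_entropySlope_sub hjk hk,
    logit_mono (hb.mem_Ioo j.succ_pos (by omega)).1 hnode (hb.mem_Ioo (by omega) hk).2]

lemma sum_mul_add_sum_mul_entropySlope {j : ℕ} (hj : j ≤ L) (t : ℝ) :
    ∑ i ∈ Finset.range j, (b (i + 1) - b i) * t +
      ∑ i ∈ Finset.Ico j L, (b (i + 1) - b i) * entropySlope b i = b j * t + binEntropy (b j) := by
  simp only [sub_mul_entropySlope, ← Finset.sum_mul, Finset.sum_range_sub, hb.zero]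
  rw [← neg_inj, neg_add, ← Finset.sum_neg_distrib]
  simp only [neg_sub]
  rw [Finset.sum_Ico_sub (fun i => binEntropy (b i)) hj, hb.last]
  simp only [sub_zero, binEntropy_one, zero_sub, neg_add_rev]
  ring

lemma mul_add_binEntropy_le_interpConj {j : ℕ} (hj : j ≤ L) (t : ℝ) :
    b j * t + binEntropy (b j) ≤ interpConj b L t := by
  have hΔ {i : ℕ} (hi : i < L) : 0 ≤ b (i + 1) - b i := sub_nonneg.mpr (hb.lt_succ hi).le
  rw [← hb.sum_mul_add_sum_mul_entropySlope hj, interpConj, ← Finset.sum_range_add_sum_Ico _ hj]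
  refine add_le_add (Finset.sum_le_sum fun i hi => ?_) (Finset.sum_le_sum fun i hi => ?_)
  · exact mul_le_mul_of_nonneg_left (le_max_left _ _)
      (hΔ ((Finset.mem_range.mp hi).trans_le hj))
  · exact mul_le_mul_of_nonneg_left (le_max_right _ _) (hΔ (Finset.mem_Ico.mp hi).2)

lemma interpConj_le_softplus (t : ℝ) : interpConj b L t ≤ softplus t := by
  classical
  have hex : ∃ j, L ≤ j ∨ t ≤ entropySlope b j := ⟨L, .inl le_rfl⟩
  obtain ⟨j, hj, hmin⟩ := Nat.findX hex
  have hjL : j ≤ L := not_lt.mp fun h => hmin L h (.inl le_rfl)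
  rw [interpConj, ← Finset.sum_range_add_sum_Ico _ hjL]
  calc _ = ∑ i ∈ Finset.range j, (b (i + 1) - b i) * t +
        ∑ i ∈ Finset.Ico j L, (b (i + 1) - b i) * entropySlope b i := by
        congr 1
        · refine Finset.sum_congr rfl fun i hi => ?_
          have := hmin i (Finset.mem_range.mp hi)
          rw [max_eq_left (not_le.mp (not_or.mp this).2).le]
        · refine Finset.sum_congr rfl fun i hi => ?_
          obtain ⟨hji, hiL⟩ := Finset.mem_Ico.mp hi
          rw [max_eq_right]
          exact (hj.resolve_left (by omega)).trans (hb.entropySlope_mono hji hiL)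
    _ = b j * t + binEntropy (b j) := hb.sum_mul_add_sum_mul_entropySlope hjL t
    _ ≤ softplus t := mul_add_binEntropy_le_softplus (hb.mem_Icc hjL) t

end IsUnitPartition

lemma integral_interpConj_logit (b : ℕ → ℝ) (L : ℕ) :
    ∫ u in (0 : ℝ)..1, interpConj b L (logit u) =
      ∑ i ∈ Finset.range L, (b (i + 1) - b i) * softplus (entropySlope b i) := by
  simp only [interpConj]
  rw [intervalIntegral.integral_finsetSum fun i _ =>
    (intervalIntegrable_max_logit _ _ _).const_mul _]
  simp only [intervalIntegral.integral_const_mul, integral_max_logit]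

lemma intervalIntegrable_interpConj_logit (b : ℕ → ℝ) (L : ℕ) (x y : ℝ) :
    IntervalIntegrable (fun u => interpConj b L (logit u)) volume x y := by
  unfold interpConj
  simpa only [Finset.sum_fn] using IntervalIntegrable.sum (Finset.range L) fun i _ =>
    (intervalIntegrable_max_logit _ _ _).const_mul _

lemma one_sub_le_sum_mul_softplus {b : ℕ → ℝ} {L : ℕ} {c : ℝ}
    (h : ∀ t, softplus t - c ≤ interpConj b L t) :
    1 - c ≤ ∑ i ∈ Finset.range L, (b (i + 1) - b i) * softplus (entropySlope b i) := by
  have hlog : IntervalIntegrable (fun u : ℝ => -log (1 - u)) volume 0 1 :=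
    (intervalIntegrable_log_one_sub 0 1).neg
  calc 1 - c = ∫ u in (0 : ℝ)..1, (-log (1 - u) - c) := by
        rw [intervalIntegral.integral_sub hlog intervalIntegrable_const, integral_neg_log_one_sub]
        simp
    _ ≤ ∫ u in (0 : ℝ)..1, interpConj b L (logit u) := by
        refine intervalIntegral.integral_mono_on_of_le_Ioo zero_le_one
          (hlog.sub intervalIntegrable_const) (intervalIntegrable_interpConj_logit b L 0 1)
          fun u hu => ?_
        rw [← softplus_logit hu]
        exact h _
    _ = _ := integral_interpConj_logit b L

/-! ### The quadratic partition -/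

/-- Nodes of the partition of `[0, 1]` into `2 * m + 1` cells that is symmetric about `1 / 2` and
whose first nodes are `i ^ 2 / N`. -/
noncomputable def quadNode (N m i : ℕ) : ℝ :=
  if i ≤ m then i ^ 2 / N else 1 - (2 * m + 1 - i : ℕ) ^ 2 / N

/-- The lengths of the cells of the partition `quadNode N m`, multiplied by `N`; these are the
numbers of points on the successive circles of the configuration. -/
def ringSize (N m i : ℕ) : ℕ :=
  if i < m then 2 * i + 1 else if i = m then N - 2 * m ^ 2 else 2 * (2 * m - i) + 1

section quadNode

variable {N m : ℕ}

lemma quadNode_of_le {i : ℕ} (hi : i ≤ m) : quadNode N m i = i ^ 2 / N := if_pos hi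

lemma quadNode_reflect {i : ℕ} (hi : i ≤ 2 * m + 1) :
    quadNode N m (2 * m + 1 - i) = 1 - quadNode N m i := by
  obtain h | h := le_or_gt i m
  · rw [quadNode, if_neg (by omega), quadNode_of_le h, Nat.sub_sub_self hi]
  · rw [quadNode_of_le (by omega), quadNode, if_neg (by omega), sub_sub_cancel]

lemma entropySlope_quadNode_reflect {i : ℕ} (hi : i ≤ 2 * m) :
    entropySlope (quadNode N m) (2 * m - i) = -entropySlope (quadNode N m) i := by
  have h₁ : quadNode N m (2 * m - i + 1) = 1 - quadNode N m i := by
    rw [← quadNode_reflect (by omega)]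
    congr 1
    omega
  have h₂ : quadNode N m (2 * m - i) = 1 - quadNode N m (i + 1) := by
    rw [← quadNode_reflect (by omega)]
    congr 1
    omega
  rw [entropySlope, entropySlope, h₁, h₂, slope_def_field, slope_def_field]
  simp only [Pi.neg_apply, binEntropy_one_sub]
  ring

lemma ringSize_pos (hm : 2 * m ^ 2 < N) (i : ℕ) : 0 < ringSize N m i := by
  unfold ringSize
  split_ifs <;> omega

lemma natCast_ringSize (hm : 2 * m ^ 2 < N) {i : ℕ} (hi : i < 2 * m + 1) :
    (ringSize N m i : ℝ) = N * (quadNode N m (i + 1) - quadNode N m i) := by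
  have hN : (N : ℝ) ≠ 0 := by
    have : 0 < N := by omega
    positivity
  obtain h | rfl | h := lt_trichotomy i m
  · rw [ringSize, if_pos h, quadNode_of_le h, quadNode_of_le h.le]
    field_simp
    push_cast
    ring
  · rw [ringSize, if_neg (lt_irrefl _), if_pos rfl, quadNode, if_neg (by omega),
      quadNode_of_le le_rfl, Nat.cast_sub hm.le, show 2 * i + 1 - (i + 1) = i by omega]
    field_simp
    push_cast
    ring
  · rw [ringSize, if_neg (by omega), if_neg (by omega), quadNode, if_neg (by omega), quadNode,
      if_neg (by omega), show 2 * m + 1 - (i + 1) = 2 * m - i by omega,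
      show 2 * m + 1 - i = 2 * m - i + 1 by omega]
    field_simp
    push_cast
    ring

lemma isUnitPartition_quadNode (hm : 2 * m ^ 2 < N) :
    IsUnitPartition (quadNode N m) (2 * m + 1) where
  zero := by simp [quadNode]
  last := by
    rw [quadNode, if_neg (by omega)]
    simp
  strictMonoOn := strictMonoOn_Iic_of_lt_succ fun i hi => by
    have h : (0 : ℝ) < N * (quadNode N m (i + 1) - quadNode N m i) := by
      rw [← natCast_ringSize hm hi]
      exact_mod_cast ringSize_pos hm i
    exact sub_pos.mp (pos_of_mul_pos_right h N.cast_nonneg)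

lemma sum_ringSize (hm : 2 * m ^ 2 < N) : ∑ i ∈ Finset.range (2 * m + 1), ringSize N m i = N := by
  have hb := isUnitPartition_quadNode hm
  rw [← Nat.cast_inj (R := ℝ), Nat.cast_sum,
    Finset.sum_congr rfl fun i hi => natCast_ringSize hm (Finset.mem_range.mp hi),
    ← Finset.mul_sum, Finset.sum_range_sub, hb.last, hb.zero, sub_zero, mul_one]

lemma log_sub_log_le_entropySlope_quadNode_sub (hm : 2 * m ^ 2 < N) {j k : ℕ} (hjk : j < k)
    (hk : k < m) :
    2 * (log k - log (j + 1)) ≤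
      entropySlope (quadNode N m) k - entropySlope (quadNode N m) j := by
  have hb := isUnitPartition_quadNode hm
  have hN : (N : ℝ) ≠ 0 := by
    have : 0 < N := by omega
    positivity
  have hnode : quadNode N m (j + 1) ≤ quadNode N m k :=
    hb.strictMonoOn.monotoneOn (show j + 1 ≤ 2 * m + 1 by omega)
      (show k ≤ 2 * m + 1 by omega) hjk
  have hlog {i : ℕ} (hi₀ : i ≠ 0) (hi : i ≤ m) : log (quadNode N m i) = 2 * log i - log N := by
    rw [quadNode_of_le hi, log_div (by positivity) hN, log_pow, Nat.cast_ofNat]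
  calc 2 * (log k - log (j + 1)) = log (quadNode N m k) - log (quadNode N m (j + 1)) := by
        rw [hlog (by omega) hk.le, hlog j.succ_ne_zero (by omega), Nat.cast_succ]
        ring
    _ ≤ logit (quadNode N m k) - logit (quadNode N m (j + 1)) :=
        log_sub_log_le_logit_sub_logit hnode (hb.mem_Ioo (by omega) (by omega)).2
    _ ≤ _ := hb.logit_sub_logit_le_entropySlope_sub hjk (by omega)

lemma exists_sq_natCast_sub_sq_le {x : ℝ} (hx₀ : 0 < x) (hx : x ≤ (m + 1) ^ 2) :
    ∃ j ≤ m, ((j : ℝ) ^ 2 - x) ^ 2 ≤ 4 * x := by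
  obtain ⟨j, hj⟩ := Nat.exists_eq_add_one.mpr (Nat.ceil_pos.mpr (sqrt_pos.mpr hx₀))
  have hjm : ⌈√x⌉₊ ≤ m + 1 :=
    Nat.ceil_le.mpr (by exact_mod_cast sqrt_le_iff.mpr ⟨by positivity, hx⟩)
  have hlow : (j : ℝ) < √x := Nat.lt_ceil.mp (by omega)
  have hupp : √x ≤ j + 1 := by exact_mod_cast hj ▸ Nat.le_ceil √x
  refine ⟨j, by omega, ?_⟩
  calc ((j : ℝ) ^ 2 - x) ^ 2 = (√x - j) ^ 2 * (√x + j) ^ 2 := by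
        rw [← mul_pow, ← sq_sqrt hx₀.le, sqrt_sq (sqrt_nonneg x)]
        ring
    _ ≤ 1 ^ 2 * (√x + √x) ^ 2 := by
        gcongr
        linarith
    _ = 4 * x := by
        rw [← two_mul, mul_pow, sq_sqrt hx₀.le]
        ring

lemma exists_sq_quadNode_sub_le (hm : 2 * m ^ 2 < N) (hmN : N ≤ 2 * (m + 1) ^ 2) {u : ℝ}
    (hu : u ∈ Ioo 0 1) :
    ∃ j ≤ 2 * m + 1, (quadNode N m j - u) ^ 2 / (u * (1 - u)) ≤ 8 / N := by
  have hN : (0 : ℝ) < N := by exact_mod_cast (show 0 < N by omega)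
  have hmN' : (N : ℝ) ≤ 2 * (m + 1) ^ 2 := by exact_mod_cast hmN
  wlog hu₂ : u ≤ 1 / 2 generalizing u
  · obtain ⟨j, hj, h⟩ := this (u := 1 - u) ⟨by linarith [hu.2], by linarith [hu.1]⟩
      (by linarith)
    refine ⟨2 * m + 1 - j, by omega, ?_⟩
    rw [quadNode_reflect hj]
    convert h using 1
    ring
  have hu₀ := hu.1
  obtain ⟨j, hj, h⟩ := exists_sq_natCast_sub_sq_le (m := m) (mul_pos hN hu₀) (by nlinarith)
  refine ⟨j, by omega, ?_⟩
  rw [div_le_iff₀ (mul_pos hu₀ (by linarith))]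
  calc (quadNode N m j - u) ^ 2 = ((j : ℝ) ^ 2 - N * u) ^ 2 / N ^ 2 := by
        rw [quadNode_of_le hj]
        field_simp
    _ ≤ 4 * (N * u) / N ^ 2 := by gcongr
    _ = 8 / N * (u * (1 / 2)) := by
        field_simp
        norm_num
    _ ≤ 8 / N * (u * (1 - u)) := by
        gcongr
        linarith

lemma softplus_sub_le_interpConj_quadNode (hm : 2 * m ^ 2 < N) (hmN : N ≤ 2 * (m + 1) ^ 2)
    (t : ℝ) : softplus t - 8 / N ≤ interpConj (quadNode N m) (2 * m + 1) t := by
  have hb := isUnitPartition_quadNode hm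
  have hu : sigmoid t ∈ Ioo 0 1 := ⟨sigmoid_pos t, sigmoid_lt_one t⟩
  obtain ⟨j, hj, hdist⟩ := exists_sq_quadNode_sub_le hm hmN hu
  have hfenchel := softplus_logit_le (hb.mem_Icc hj) hu
  rw [logit_sigmoid] at hfenchel
  linarith [hb.mul_add_binEntropy_le_interpConj hj t]

lemma sub_le_sum_ringSize_mul_softplus (hm : 2 * m ^ 2 < N) (hmN : N ≤ 2 * (m + 1) ^ 2) :
    (N : ℝ) - 8 ≤ ∑ i ∈ Finset.range (2 * m + 1),
      ringSize N m i * softplus (entropySlope (quadNode N m) i) := by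
  have hN : (0 : ℝ) < N := by exact_mod_cast (show 0 < N by omega)
  calc (N : ℝ) - 8 = N * (1 - 8 / N) := by field_simp
    _ ≤ N * ∑ i ∈ Finset.range (2 * m + 1), (quadNode N m (i + 1) - quadNode N m i) *
          softplus (entropySlope (quadNode N m) i) :=
        mul_le_mul_of_nonneg_left
          (one_sub_le_sum_mul_softplus (softplus_sub_le_interpConj_quadNode hm hmN)) hN.le
    _ = _ := by
        rw [Finset.mul_sum]
        refine Finset.sum_congr rfl fun i hi => ?_
        rw [natCast_ringSize hm (Finset.mem_range.mp hi), mul_assoc]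

lemma sum_ringSize_mul_max_le (hm : 2 * m ^ 2 < N) (t : ℝ) :
    ∑ i ∈ Finset.range (2 * m + 1), ringSize N m i * max t (entropySlope (quadNode N m) i) ≤
      N * softplus t := by
  calc _ = N * interpConj (quadNode N m) (2 * m + 1) t := by
        rw [interpConj, Finset.mul_sum]
        refine Finset.sum_congr rfl fun i hi => ?_
        rw [natCast_ringSize hm (Finset.mem_range.mp hi), mul_assoc]
    _ ≤ N * softplus t :=
        mul_le_mul_of_nonneg_left ((isUnitPartition_quadNode hm).interpConj_le_softplus t)
          N.cast_nonneg

end quadNode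

/-! ### Interference between circles -/

lemma sum_exp_neg_half_le (m : ℕ) : ∑ k ∈ Finset.range m, exp (-(k / 2 : ℝ)) ≤ 3 := by
  have hq : exp (-(1 / 2)) ≤ 2 / 3 := by
    rw [exp_neg]
    exact inv_le_of_inv_le₀ (by norm_num) (by linarith [add_one_le_exp (1 / 2 : ℝ)])
  calc ∑ k ∈ Finset.range m, exp (-(k / 2 : ℝ)) = ∑ k ∈ Finset.range m, exp (-(1 / 2)) ^ k := by
        refine Finset.sum_congr rfl fun k _ => ?_
        rw [← exp_nat_mul]
        ring_nf
    _ ≤ (1 - exp (-(1 / 2)))⁻¹ :=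
        sum_le_hasSum _ (fun k _ => by positivity)
          (hasSum_geometric_of_lt_one (exp_pos _).le (by linarith))
    _ ≤ 3 := inv_le_of_inv_le₀ (by norm_num) (by linarith)

lemma sum_exp_neg_half_abs_sub_le (m K : ℕ) :
    ∑ k ∈ Finset.range m, exp (-(|(k : ℝ) - K| / 2)) ≤ 6 := by
  have hleft : ∑ k ∈ Finset.range K, exp (-(|(k : ℝ) - K| / 2)) ≤ 3 := by
    refine le_trans ?_ (sum_exp_neg_half_le K)
    rw [← Finset.sum_range_reflect]
    refine Finset.sum_le_sum fun k hk => ?_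
    have hk : k + 1 ≤ K := Finset.mem_range.mp hk
    rw [Nat.sub_sub, add_comm 1 k, Nat.cast_sub hk, sub_sub_cancel_left, abs_neg, Nat.abs_cast]
    gcongr
    omega
  have hright : ∑ k ∈ Finset.range m, exp (-(|((K + k : ℕ) : ℝ) - K| / 2)) ≤ 3 := by
    simpa using sum_exp_neg_half_le m
  calc ∑ k ∈ Finset.range m, exp (-(|(k : ℝ) - K| / 2))
      ≤ ∑ k ∈ Finset.range (K + m), exp (-(|(k : ℝ) - K| / 2)) :=
        Finset.sum_le_sum_of_subset_of_nonneg (Finset.range_subset_range.mpr (by omega))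
          fun _ _ _ => (exp_pos _).le
    _ ≤ 6 := by
        rw [Finset.sum_range_add]
        linarith

lemma one_sub_div_le_log_sub_log {x y : ℝ} (hx : 0 < x) (hy : 0 < y) :
    1 - x / y ≤ log y - log x := by
  rw [← log_div hy.ne' hx.ne']
  simpa using one_sub_inv_le_log_of_pos (div_pos hy hx)

section LogSeparated

variable {s : ℕ → ℝ} {m : ℕ}
  (hgap : ∀ ⦃j k : ℕ⦄, j < k → k < m → log k - log (j + 1) ≤ s k - s j)

include hgap

lemma sub_sub_one_div_le_sub {j k : ℕ} (hjk : j < k) (hk : k < m) :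
    (k - j - 1 : ℝ) / k ≤ s k - s j := by
  have hk₀ : (0 : ℝ) < k := by exact_mod_cast (show 0 < k by omega)
  calc (k - j - 1 : ℝ) / k = 1 - (j + 1) / k := by
        field_simp
        ring
    _ ≤ log k - log (j + 1) := one_sub_div_le_log_sub_log (by positivity) hk₀
    _ ≤ s k - s j := hgap hjk hk

lemma sub_sub_one_le_mul_abs_sub {t : ℝ} {j k : ℕ} (hjk : j < k) (hk : k < m) (ht : t ≤ s j) :
    (k - j - 1 : ℝ) ≤ (2 * k + 1) * |t - s k| := by
  have hk₀ : (0 : ℝ) < k := by exact_mod_cast (show 0 < k by omega)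
  have hdist : (k - j - 1 : ℝ) / k ≤ |t - s k| := by
    rw [abs_sub_comm]
    exact ((sub_sub_one_div_le_sub hgap hjk hk).trans (by linarith)).trans (le_abs_self (s k - t))
  rw [div_le_iff₀' hk₀] at hdist
  nlinarith [abs_nonneg (t - s k)]

lemma half_min_sub_one_le_mul_abs_sub {t : ℝ} {k l : ℕ} (hkl : k < l) (hl : l < m)
    (ht : s l ≤ t) :
    min (k : ℝ) (l + 1 - k) / 2 - 1 ≤ (2 * k + 1) * |t - s k| := by
  have hkl' : (k : ℝ) + 1 ≤ l := by exact_mod_cast hkl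
  have hdist : (l - k - 1 : ℝ) / l ≤ |t - s k| :=
    ((sub_sub_one_div_le_sub hgap hkl hl).trans (by linarith)).trans (le_abs_self _)
  calc min (k : ℝ) (l + 1 - k) / 2 - 1 ≤ (k + 1) * ((l - k - 1) / l) := by
        rw [← mul_div_assoc, le_div_iff₀ (by linarith)]
        obtain h | h := le_total (k : ℝ) (l + 1 - k)
        · rw [min_eq_left h]
          nlinarith
        · rw [min_eq_right h]
          nlinarith
    _ ≤ (2 * k + 1) * |t - s k| :=
        mul_le_mul (by linarith) hdist (div_nonneg (by linarith) (by linarith)) (by linarith)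

lemma half_min_abs_sub_one_le_mul_abs_sub {t : ℝ} {K k : ℕ} (hKm : K ≤ m) (hK : K < m → t ≤ s K)
    (hlt : ∀ j < K, s j < t) (hk : k < m) :
    min (k : ℝ) |(k : ℝ) - K| / 2 - 1 ≤ (2 * k + 1) * |t - s k| := by
  obtain hKk | hKk | hKk : K < k ∨ k ≤ K ∧ K ≤ k + 1 ∨ k + 1 < K := by omega
  · have hKk' : (K : ℝ) + 1 ≤ k := by exact_mod_cast hKk
    have habs : |(k : ℝ) - K| = k - K := abs_of_nonneg (by linarith)
    have hmin := (min_le_right (k : ℝ) |(k : ℝ) - K|).trans_eq habs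
    linarith [sub_sub_one_le_mul_abs_sub hgap hKk hk (hK (by omega))]
  · have habs : |(k : ℝ) - K| ≤ 1 := by
      have h₁ : (k : ℝ) ≤ K := by exact_mod_cast hKk.1
      have h₂ : (K : ℝ) ≤ k + 1 := by exact_mod_cast hKk.2
      exact abs_le.mpr ⟨by linarith, by linarith⟩
    have hrhs : 0 ≤ (2 * k + 1) * |t - s k| := by positivity
    linarith [min_le_right (k : ℝ) |(k : ℝ) - K|]
  · obtain ⟨l, rfl⟩ := Nat.exists_eq_add_one.mpr (Nat.zero_lt_of_lt hKk)
    have hkl : k < l := by omega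
    have hkl' : (k : ℝ) + 1 ≤ l := by exact_mod_cast hkl
    have habs : |(k : ℝ) - (l + 1 : ℕ)| = l + 1 - k := by
      rw [abs_sub_comm, Nat.cast_succ, abs_of_nonneg (by linarith)]
    rw [habs]
    exact half_min_sub_one_le_mul_abs_sub hgap hkl (by omega) (hlt l l.lt_succ_self).le

lemma sum_exp_neg_mul_abs_sub_le (t : ℝ) :
    ∑ k ∈ Finset.range m, exp (-((2 * k + 1) * |t - s k|)) ≤ 9 * exp 1 := by
  classical
  have hex : ∃ K, m ≤ K ∨ t ≤ s K := ⟨m, .inl le_rfl⟩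
  obtain ⟨K, hK, hmin⟩ := Nat.findX hex
  have hterm {k : ℕ} (hk : k < m) : exp (-((2 * k + 1) * |t - s k|)) ≤
      exp 1 * (exp (-(k / 2 : ℝ)) + exp (-(|(k : ℝ) - K| / 2))) := by
    have hmin_le := half_min_abs_sub_one_le_mul_abs_sub hgap
      (not_lt.mp fun h => hmin m h (.inl le_rfl)) (fun h => hK.resolve_left h.not_ge)
      (fun j hj => not_le.mp (not_or.mp (hmin j hj)).2) hk
    calc exp (-((2 * k + 1) * |t - s k|))
        ≤ exp (1 + -(min (k : ℝ) |(k : ℝ) - K| / 2)) := exp_le_exp.mpr (by linarith)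
      _ = exp 1 * exp (-(min (k : ℝ) |(k : ℝ) - K| / 2)) := exp_add _ _
      _ ≤ _ := by
        gcongr
        obtain h | h := min_choice (k : ℝ) |(k : ℝ) - K| <;> rw [h]
        · exact le_add_of_nonneg_right (exp_pos _).le
        · exact le_add_of_nonneg_left (exp_pos _).le
  calc _ ≤ ∑ k ∈ Finset.range m, exp 1 * (exp (-(k / 2 : ℝ)) + exp (-(|(k : ℝ) - K| / 2))) :=
        Finset.sum_le_sum fun k hk => hterm (Finset.mem_range.mp hk)
    _ = exp 1 * (∑ k ∈ Finset.range m, exp (-(k / 2 : ℝ)) +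
          ∑ k ∈ Finset.range m, exp (-(|(k : ℝ) - K| / 2))) := by
        rw [← Finset.mul_sum, Finset.sum_add_distrib]
    _ ≤ exp 1 * (3 + 6) := by
        gcongr
        exacts [sum_exp_neg_half_le m, sum_exp_neg_half_abs_sub_le m K]
    _ = 9 * exp 1 := by ring

end LogSeparated

lemma sum_exp_neg_ringSize_mul_abs_sub_le {N m : ℕ} (hm : 2 * m ^ 2 < N) (t : ℝ) :
    ∑ i ∈ Finset.range (2 * m + 1),
      exp (-(ringSize N m i * |t - entropySlope (quadNode N m) i / 2|)) ≤ 18 * exp 1 + 1 := by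
  set s : ℕ → ℝ := fun i => entropySlope (quadNode N m) i / 2
  let F : ℕ → ℝ := fun i => exp (-(ringSize N m i * |t - s i|))
  have hgap : ∀ ⦃j k : ℕ⦄, j < k → k < m → log k - log (j + 1) ≤ s k - s j := fun j k hjk hk => by
    have := log_sub_log_le_entropySlope_quadNode_sub hm hjk hk
    simp only [s]
    linarith
  have hlower : ∑ i ∈ Finset.range m, F i ≤ 9 * exp 1 := by
    refine le_of_eq_of_le (Finset.sum_congr rfl fun i hi => ?_)
      (sum_exp_neg_mul_abs_sub_le hgap t)
    simp [F, ringSize, Finset.mem_range.mp hi]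
  have hupper : ∑ i ∈ Finset.range m, F (m + 1 + i) ≤ 9 * exp 1 := by
    rw [← Finset.sum_range_reflect]
    refine le_of_eq_of_le (Finset.sum_congr rfl fun i hi => ?_)
      (sum_exp_neg_mul_abs_sub_le hgap (-t))
    have hi := Finset.mem_range.mp hi
    have hsize : ringSize N m (2 * m - i) = 2 * i + 1 := by
      rw [ringSize, if_neg (by omega), if_neg (by omega)]
      omega
    have hslope : s (2 * m - i) = -s i := by
      simp only [s, entropySlope_quadNode_reflect (show i ≤ 2 * m by omega), neg_div]
    rw [show m + 1 + (m - 1 - i) = 2 * m - i by omega]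
    simp only [F]
    rw [hsize, hslope, ← abs_neg (t - -s i)]
    push_cast
    ring_nf
  have hmiddle : F m ≤ 1 := exp_le_one_iff.mpr (neg_nonpos.mpr (by positivity))
  calc ∑ i ∈ Finset.range (2 * m + 1), F i
      = ∑ i ∈ Finset.range m, F i + F m + ∑ i ∈ Finset.range m, F (m + 1 + i) := by
        rw [show 2 * m + 1 = m + 1 + m by omega, Finset.sum_range_add, Finset.sum_range_succ]
    _ ≤ 18 * exp 1 + 1 := by linarith

/-! ### Circles of roots of unity -/

lemma two_mul_Usph {z w : ℂ} (h : z ≠ w) :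
    2 * Usph z w = 1 + 2 * log ‖z - w‖ - log (1 + ‖z‖ ^ 2) - log (1 + ‖w‖ ^ 2) := by
  have hzw : ‖z - w‖ ≠ 0 := norm_ne_zero_iff.mpr (sub_ne_zero.mpr h)
  rw [Usph, log_div (by positivity) (by positivity), log_mul (by positivity) (by positivity),
    log_pow, Nat.cast_ofNat]
  ring

lemma sum_nthRootsFinset_two_mul_Usph {n : ℕ} (hn : 0 < n) {z a : ℂ} (h : z ^ n ≠ a ^ n) :
    ∑ ζ ∈ Polynomial.nthRootsFinset n (1 : ℂ), 2 * Usph z (ζ * a) =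
      n + 2 * log ‖z ^ n - a ^ n‖ - n * log (1 + ‖z‖ ^ 2) - n * log (1 + ‖a‖ ^ 2) := by
  have hprim := Complex.isPrimitiveRoot_exp n hn.ne'
  have hroot {ζ : ℂ} (hζ : ζ ∈ Polynomial.nthRootsFinset n (1 : ℂ)) : ζ ^ n = 1 :=
    (Polynomial.mem_nthRootsFinset hn _).mp hζ
  have hne {ζ : ℂ} (hζ : ζ ∈ Polynomial.nthRootsFinset n (1 : ℂ)) : z ≠ ζ * a := by
    rintro rfl
    exact h (by rw [mul_pow, hroot hζ, one_mul])
  have hterm {ζ : ℂ} (hζ : ζ ∈ Polynomial.nthRootsFinset n (1 : ℂ)) : 2 * Usph z (ζ * a) =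
      1 + 2 * log ‖z - ζ * a‖ - log (1 + ‖z‖ ^ 2) - log (1 + ‖a‖ ^ 2) := by
    rw [two_mul_Usph (hne hζ), norm_mul, Complex.norm_eq_one_of_pow_eq_one (hroot hζ) hn.ne',
      one_mul]
  have hlog : ∑ ζ ∈ Polynomial.nthRootsFinset n (1 : ℂ), log ‖z - ζ * a‖ =
      log ‖z ^ n - a ^ n‖ := by
    rw [hprim.pow_sub_pow_eq_prod_sub_mul z a hn, norm_prod, log_prod]
    exact fun ζ hζ => norm_ne_zero_iff.mpr (sub_ne_zero.mpr (hne hζ))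
  rw [Finset.sum_congr rfl fun ζ hζ => hterm hζ]
  simp only [Finset.sum_sub_distrib, Finset.sum_add_distrib, ← Finset.mul_sum, Finset.sum_const,
    hprim.card_nthRootsFinset, hlog, nsmul_eq_mul, mul_one]

lemma log_exp_add_exp_le (x y : ℝ) : log (exp x + exp y) ≤ max x y + exp (-|x - y|) := by
  wlog h : y ≤ x generalizing x y
  · rw [add_comm (exp x), max_comm, abs_sub_comm]
    exact this y x (le_of_not_ge h)
  have hfactor : exp x + exp y = exp x * (1 + exp (-(x - y))) := by
    rw [mul_add, mul_one, ← exp_add]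
    ring_nf
  rw [max_eq_left h, abs_of_nonneg (sub_nonneg.mpr h), hfactor, log_mul (by positivity)
    (by positivity), log_exp]
  linarith [log_le_sub_one_of_pos (show 0 < 1 + exp (-(x - y)) by positivity)]

lemma log_norm_pow_sub_pow_le {𝕜 : Type*} [NormedDivisionRing 𝕜] {z a : 𝕜} (hz : z ≠ 0)
    (ha : a ≠ 0) {n : ℕ} (h : z ^ n ≠ a ^ n) :
    log ‖z ^ n - a ^ n‖ ≤
      n * max (log ‖z‖) (log ‖a‖) + exp (-(n * |log ‖z‖ - log ‖a‖|)) := by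
  have hexp {x : 𝕜} (hx : x ≠ 0) : ‖x ^ n‖ = exp (n * log ‖x‖) := by
    rw [norm_pow, exp_nat_mul, exp_log (norm_pos_iff.mpr hx)]
  calc log ‖z ^ n - a ^ n‖ ≤ log (exp (n * log ‖z‖) + exp (n * log ‖a‖)) := by
        rw [← hexp hz, ← hexp ha]
        exact log_le_log (norm_sub_pos_iff.mpr h) (norm_sub_le _ _)
    _ ≤ max (n * log ‖z‖) (n * log ‖a‖) + exp (-|n * log ‖z‖ - n * log ‖a‖|) :=
        log_exp_add_exp_le _ _
    _ = _ := by
        rw [← mul_max_of_nonneg _ _ n.cast_nonneg, ← mul_sub, abs_mul, Nat.abs_cast]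

lemma log_one_add_norm_sq {z : ℂ} (hz : z ≠ 0) :
    log (1 + ‖z‖ ^ 2) = softplus (2 * log ‖z‖) := by
  rw [softplus, mul_comm, exp_mul, exp_log (norm_pos_iff.mpr hz), rpow_two]

lemma sum_nthRootsFinset_two_mul_Usph_le {n : ℕ} (hn : 0 < n) {z : ℂ} (hz : z ≠ 0) {σ : ℝ}
    (h : z ^ n ≠ (exp (σ / 2) : ℂ) ^ n) :
    ∑ ζ ∈ Polynomial.nthRootsFinset n (1 : ℂ), 2 * Usph z (ζ * exp (σ / 2)) ≤
      n + n * max (2 * log ‖z‖) σ + 2 * exp (-(n * |log ‖z‖ - σ / 2|)) -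
        n * softplus (2 * log ‖z‖) - n * softplus σ := by
  have ha : (exp (σ / 2) : ℂ) ≠ 0 := by exact_mod_cast (exp_pos (σ / 2)).ne'
  have hlog : log ‖(exp (σ / 2) : ℂ)‖ = σ / 2 := by
    rw [Complex.norm_of_nonneg (exp_pos _).le, log_exp]
  have hmax : max (2 * log ‖z‖) σ = 2 * max (log ‖z‖) (σ / 2) := by
    rw [mul_max_of_nonneg _ _ zero_le_two, mul_div_cancel₀ _ two_ne_zero]
  have hpow := log_norm_pow_sub_pow_le hz ha h
  rw [sum_nthRootsFinset_two_mul_Usph hn h, log_one_add_norm_sq hz, log_one_add_norm_sq ha, hmax,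
    hlog, mul_div_cancel₀ _ two_ne_zero]
  rw [hlog] at hpow
  linarith

lemma sum_ring_Usph_le {N m : ℕ} (hm : 2 * m ^ 2 < N) (hmN : N ≤ 2 * (m + 1) ^ 2) {z : ℂ}
    (hz : z ≠ 0)
    (h : ∀ i, z ^ ringSize N m i ≠
      (exp (entropySlope (quadNode N m) i / 2) : ℂ) ^ ringSize N m i) :
    ∑ i ∈ Finset.range (2 * m + 1), ∑ ζ ∈ Polynomial.nthRootsFinset (ringSize N m i) (1 : ℂ),
      Usph z (ζ * exp (entropySlope (quadNode N m) i / 2)) ≤ 5 + 18 * exp 1 := by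
  have hring := Finset.sum_le_sum fun i (_ : i ∈ Finset.range (2 * m + 1)) =>
    sum_nthRootsFinset_two_mul_Usph_le (ringSize_pos hm i) hz (h i)
  have hsize : ∑ i ∈ Finset.range (2 * m + 1), (ringSize N m i : ℝ) = N := by
    exact_mod_cast sum_ringSize hm
  simp only [Finset.sum_sub_distrib, Finset.sum_add_distrib, ← Finset.mul_sum, ← Finset.sum_mul,
    hsize] at hring
  linarith [sum_ringSize_mul_max_le hm (2 * log ‖z‖), sub_le_sum_ringSize_mul_softplus hm hmN,
    sum_exp_neg_ringSize_mul_abs_sub_le hm (log ‖z‖)]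

lemma ae_pow_ne {n : ℕ} (hn : 0 < n) (c : ℂ) : ∀ᵐ z : ℂ, z ^ n ≠ c := by
  filter_upwards [(Polynomial.nthRoots n c).toFinset.countable_toSet.ae_notMem volume] with z hz h
  exact hz (by simpa [Polynomial.mem_nthRoots hn] using h)

lemma exists_ae_sum_Usph_le {N : ℕ} (hN : 0 < N) :
    ∃ w : Fin N → ℂ, ∀ᵐ z ∂sphericalMeasure, ∑ j, Usph z (w j) ≤ 5 + 18 * exp 1 := by
  obtain ⟨m, hm, hmN⟩ : ∃ m, 2 * m ^ 2 < N ∧ N ≤ 2 * (m + 1) ^ 2 := by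
    have h₁ := Nat.sqrt_le' ((N - 1) / 2)
    have h₂ := Nat.succ_le_succ_sqrt' ((N - 1) / 2)
    exact ⟨Nat.sqrt ((N - 1) / 2), by omega, by omega⟩
  let radius (i : ℕ) : ℝ := exp (entropySlope (quadNode N m) i / 2)
  let Index := Σ i : Fin (2 * m + 1), Polynomial.nthRootsFinset (ringSize N m i) (1 : ℂ)
  have hcard : Fintype.card Index = N := by
    have hring (i : Fin (2 * m + 1)) :
        Fintype.card (Polynomial.nthRootsFinset (ringSize N m i) (1 : ℂ)) = ringSize N m i := by
      rw [Fintype.card_coe,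
        (Complex.isPrimitiveRoot_exp _ (ringSize_pos hm i).ne').card_nthRootsFinset]
    rw [Fintype.card_sigma, Finset.sum_congr rfl fun i _ => hring i, Fin.sum_univ_eq_sum_range,
      sum_ringSize hm]
  let e : Fin N ≃ Index := (Fintype.equivFinOfCardEq hcard).symm
  refine ⟨fun j => (e j).2 * radius (e j).1, (withDensity_absolutelyContinuous _ _).ae_le ?_⟩
  filter_upwards [ae_pow_ne one_pos 0,
    ae_all_iff.mpr fun i => ae_pow_ne (ringSize_pos hm i) ((radius i : ℂ) ^ ringSize N m i)]
    with z hz hroots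
  calc ∑ j, Usph z ((e j).2 * radius (e j).1)
      = ∑ p : Index, Usph z (p.2 * radius p.1) :=
        e.sum_comp fun p => Usph z (p.2 * radius p.1)
    _ = ∑ i ∈ Finset.range (2 * m + 1), ∑ ζ ∈ Polynomial.nthRootsFinset (ringSize N m i) (1 : ℂ),
          Usph z (ζ * radius i) := by
        rw [Fintype.sum_sigma, ← Fin.sum_univ_eq_sum_range]
        exact Finset.sum_congr rfl fun i _ =>
          Finset.sum_coe_sort _ fun ζ => Usph z (ζ * radius i)
    _ ≤ 5 + 18 * exp 1 := sum_ring_Usph_le hm hmN (by simpa using hz) hroots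

lemma one_le_thetaSph {β : ℝ} (hβ : 0 ≤ β) (N : ℕ) : 1 ≤ ThetaSph N β := by
  rw [thetaSph_eq_iInf_integral]
  exact le_ciInf fun w => one_le_integral_exp_sum_Usph hβ w

lemma thetaSph_le_exp_mul {N : ℕ} {β C : ℝ} (hβ : 0 ≤ β) (w : Fin N → ℂ)
    (hw : ∀ᵐ z ∂sphericalMeasure, ∑ j, Usph z (w j) ≤ C) : ThetaSph N β ≤ exp (β * C) := by
  rw [thetaSph_eq_iInf_integral]
  calc _ ≤ ∫ z, exp (∑ j, β * Usph z (w j)) ∂sphericalMeasure :=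
        ciInf_le ⟨0, forall_mem_range.mpr fun _ => integral_nonneg fun _ => (exp_pos _).le⟩ w
    _ ≤ ∫ _, exp (β * C) ∂sphericalMeasure := by
        refine integral_mono_of_nonneg (.of_forall fun _ => (exp_pos _).le) (integrable_const _) ?_
        filter_upwards [hw] with z hz
        simp only [← Finset.mul_sum]
        gcongr
    _ = exp (β * C) := by simp

lemma thetaSph_zero (N : ℕ) : ThetaSph N 0 = 1 := by
  simp [thetaSph_eq_iInf_integral]

/-- uniform bounds on the spherical packing number. -/
theorem thetaSph_bounds :
    (∃ K : ℝ, 1 < K ∧ ∀ N : ℕ, 1 ≤ N → ∀ β : ℝ, 0 < β →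
      1 ≤ ThetaSph N β ∧ ThetaSph N β ≤ K ^ β) ∧
    ∀ N : ℕ, 1 ≤ N → ThetaSph N 0 = 1 := by
  refine ⟨⟨exp (5 + 18 * exp 1), one_lt_exp_iff.mpr (by positivity), fun N hN β hβ =>
    ⟨one_le_thetaSph hβ.le N, ?_⟩⟩, fun N _ => thetaSph_zero N⟩
  obtain ⟨w, hw⟩ := exists_ae_sum_Usph_le hN
  rw [← exp_mul, mul_comm]
  exact thetaSph_le_exp_mul hβ.le w hw
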